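/- arXiv:quant-ph/9706001 — 2 statements merged into one kernel-verified Lean document; each statement's English description precedes it below -/
import Mathlib

section
/- Let 𝔥 be a separable complex Hilbert space of dimension greater than two and let d be a countably additive, tracially bounded decoherence functional for 𝔥. Then there exists a unique bounded linear operator 𝔐 on 𝔥 ⊗ 𝔥 such that, whenever p and q are projections on 𝔥 and {pₙ}_{n∈ℕ}, {qₙ}_{n∈ℕ} are orthogonal families of finite rank projections with p = Σₙ pₙ and q = Σₙ qₙ, one has d(p,q) = Σᵢ Σⱼ tr((pᵢ ⊗ qⱼ)𝔐). -/
/- Common background definitions: decoherence functionals on the projection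
lattice of a complex Hilbert space, boundedness/additivity notions, trace class
operators, and an axiomatisation of the Hilbert space tensor product
`𝔥 ⊗ 𝔥` together with the operator tensor product. -/

noncomputable section

open scoped ComplexInnerProductSpace ComplexOrder
open ContinuousLinearMap

universe u

variable {E : Type u} [NormedAddCommGroup E] [InnerProductSpace ℂ E] [CompleteSpace E]
variable {G : Type u} [NormedAddCommGroup G] [InnerProductSpace ℂ G] [CompleteSpace G]

/-- `p` is an orthogonal projection on a Hilbert space. -/
def IsOrthoProj (p : E →L[ℂ] E) : Prop :=
  IsIdempotentElem p ∧ IsSelfAdjoint p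

/-- `p` is an operator of finite rank. -/
def HasFiniteRank (p : E →L[ℂ] E) : Prop :=
  FiniteDimensional ℂ ↥(LinearMap.range (p : E →ₗ[ℂ] E))

/-- A decoherence functional on the lattice of projections `P(𝔥)`
(modelled as a function on all pairs of bounded operators whose defining
properties refer only to its values at pairs of orthogonal projections). -/
structure IsDecoherenceFunctional (d : (E →L[ℂ] E) → (E →L[ℂ] E) → ℂ) : Prop where
  hermitian : ∀ p q, IsOrthoProj p → IsOrthoProj q → d p q = starRingEnd ℂ (d q p)
  pos : ∀ p, IsOrthoProj p → 0 ≤ d p p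
  normalized : d 1 1 = 1
  orthoadd : ∀ p₁ p₂ q, IsOrthoProj p₁ → IsOrthoProj p₂ → IsOrthoProj q →
    p₁ * p₂ = 0 → d (p₁ + p₂) q = d p₁ q + d p₂ q

/-- A decoherence functional is bounded if `{|d(p,q)|}` is a bounded set. -/
def DFBounded (d : (E →L[ℂ] E) → (E →L[ℂ] E) → ℂ) : Prop :=
  ∃ C : ℝ, ∀ p q, IsOrthoProj p → IsOrthoProj q → ‖d p q‖ ≤ C

/-- Countable additivity of a decoherence functional: for every countable
pairwise orthogonal family of projections summing (strongly) to `P`,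
`d (P, q) = ∑ d (pᵢ, q)`. -/
def DFCountablyAdditive (d : (E →L[ℂ] E) → (E →L[ℂ] E) → ℂ) : Prop :=
  ∀ (p : ℕ → E →L[ℂ] E) (P q : E →L[ℂ] E),
    (∀ i, IsOrthoProj (p i)) → IsOrthoProj P → IsOrthoProj q →
    (∀ i j, i ≠ j → p i * p j = 0) →
    (∀ x : E, HasSum (fun i => p i x) (P x)) →
    HasSum (fun i => d (p i) q) (d P q)

/-- Complete additivity of a decoherence functional. -/
def DFCompletelyAdditive (d : (E →L[ℂ] E) → (E →L[ℂ] E) → ℂ) : Prop :=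
  ∀ (ι : Type u) (p : ι → E →L[ℂ] E) (P q : E →L[ℂ] E),
    (∀ i, IsOrthoProj (p i)) → IsOrthoProj P → IsOrthoProj q →
    (∀ i j, i ≠ j → p i * p j = 0) →
    (∀ x : E, HasSum (fun i => p i x) (P x)) →
    HasSum (fun i => d (p i) q) (d P q)

/-- A bilinear form `D` on `B(𝔥) × B(𝔥)` is bounded. -/
def IsBoundedBilinear (D : (E →L[ℂ] E) →ₗ[ℂ] (E →L[ℂ] E) →ₗ[ℂ] ℂ) : Prop :=
  ∃ C : ℝ, ∀ x y : E →L[ℂ] E, ‖D x y‖ ≤ C * ‖x‖ * ‖y‖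

/-- The bilinear form `D` extends the decoherence functional `d`. -/
def ExtendsDF (D : (E →L[ℂ] E) →ₗ[ℂ] (E →L[ℂ] E) →ₗ[ℂ] ℂ)
    (d : (E →L[ℂ] E) → (E →L[ℂ] E) → ℂ) : Prop :=
  ∀ p q, IsOrthoProj p → IsOrthoProj q → D p q = d p q

/-- `T` is a trace class operator (via the standard characterisation: the sums
`∑ |⟪eᵢ, T fᵢ⟫|` over finite orthonormal families are uniformly bounded). -/
def IsTraceClass (T : E →L[ℂ] E) : Prop :=
  ∃ C : ℝ, ∀ (n : ℕ) (e f : Fin n → E), Orthonormal ℂ e → Orthonormal ℂ f →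
    ∑ i, ‖⟪e i, T (f i)⟫‖ ≤ C

/-- The trace of an operator computed in the Hilbert basis `b` (for a trace
class operator this is basis independent and is the usual trace). -/
def traceAlong {ι : Type*} (b : HilbertBasis ι ℂ E) (T : E →L[ℂ] E) : ℂ :=
  ∑' i, ⟪b i, T (b i)⟫

/-- The rank one orthogonal projection `p_ξ` onto the span of a unit vector `ξ`. -/
def rankOneProj (ξ : E) : E →L[ℂ] E :=
  (innerSL ℂ ξ).smulRight ξ

/-- An axiomatisation of the Hilbert space tensor product `G = E ⊗ E`:
a bilinear map `tmul` into `G` multiplying inner products and having dense span. -/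
structure HilbertTensorProduct (E G : Type u) [NormedAddCommGroup E]
    [InnerProductSpace ℂ E] [NormedAddCommGroup G] [InnerProductSpace ℂ G] :
    Type u where
  tmul : E →ₗ[ℂ] E →ₗ[ℂ] G
  inner_tmul : ∀ a b c d : E, ⟪tmul a b, tmul c d⟫ = ⟪a, c⟫ * ⟪b, d⟫
  dense_span : Dense (↑(Submodule.span ℂ (Set.range fun z : E × E => tmul z.1 z.2)) : Set G)

/-- The algebraic tensor product `E ⊗_alg E`, viewed as a (dense) subspace of `G`. -/
def HilbertTensorProduct.algSpan (J : HilbertTensorProduct E G) : Submodule ℂ G :=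
  Submodule.span ℂ (Set.range fun z : E × E => J.tmul z.1 z.2)

/-- The Hilbert space tensor product together with the operator tensor product
`(x, y) ↦ x ⊗ y` on bounded operators. -/
structure OperatorTensor (E G : Type u) [NormedAddCommGroup E]
    [InnerProductSpace ℂ E] [NormedAddCommGroup G] [InnerProductSpace ℂ G]
    extends HilbertTensorProduct E G where
  op : (E →L[ℂ] E) → (E →L[ℂ] E) → (G →L[ℂ] G)
  op_tmul : ∀ (x y : E →L[ℂ] E) (a b : E), op x y (tmul a b) = tmul (x a) (y b)

/-- The algebraic tensor product `K(𝔥) • K(𝔥)`: the span in `B(G)` of the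
operators `x ⊗ y` with `x, y` compact. -/
def OperatorTensor.compactSpan (J : OperatorTensor E G) : Submodule ℂ (G →L[ℂ] G) :=
  Submodule.span ℂ {T | ∃ x y : E →L[ℂ] E,
    IsCompactOperator (⇑x) ∧ IsCompactOperator (⇑y) ∧ T = J.op x y}

/-- `β` is the linear functional on `K(𝔥) • K(𝔥)` induced by the bilinear form
`D`, i.e. `β (x ⊗ y) = D (x, y)` for compact `x, y`. -/
def IsBetaFor (J : OperatorTensor E G)
    (D : (E →L[ℂ] E) →ₗ[ℂ] (E →L[ℂ] E) →ₗ[ℂ] ℂ)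
    (β : ↥J.compactSpan →ₗ[ℂ] ℂ) : Prop :=
  ∀ x y : E →L[ℂ] E, IsCompactOperator (⇑x) → IsCompactOperator (⇑y) →
    ∀ hm : J.op x y ∈ J.compactSpan, β ⟨J.op x y, hm⟩ = D x y

/-- `β` is bounded for the operator norm (inherited from `B(G)`). -/
def BetaNormBounded (J : OperatorTensor E G) (β : ↥J.compactSpan →ₗ[ℂ] ℂ) : Prop :=
  ∃ C : ℝ, ∀ S : J.compactSpan, ‖β S‖ ≤ C * ‖(S : G →L[ℂ] G)‖

/-- A decoherence functional is tensor bounded if its associated functional `β`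
on `K(𝔥) • K(𝔥)` is bounded for the (pre-)C*-norm. -/
def IsTensorBounded (J : OperatorTensor E G)
    (d : (E →L[ℂ] E) → (E →L[ℂ] E) → ℂ) : Prop :=
  ∃ D, IsBoundedBilinear D ∧ ExtendsDF D d ∧
    ∃ β, IsBetaFor J D β ∧ BetaNormBounded J β

/-- `β` is uniformly bounded on the projections `p_ξ`, `ξ` a unit vector of the
algebraic tensor product `𝔥 ⊗_alg 𝔥`. -/
def BetaTraciallyBounded (J : OperatorTensor E G) (β : ↥J.compactSpan →ₗ[ℂ] ℂ) : Prop :=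
  ∃ C : ℝ, ∀ ξ : G, ξ ∈ J.toHilbertTensorProduct.algSpan → ‖ξ‖ = 1 →
    ∀ hm : rankOneProj ξ ∈ J.compactSpan, ‖β ⟨rankOneProj ξ, hm⟩‖ ≤ C

/-- A decoherence functional is tracially bounded if it is bounded and its
associated functional `β` is uniformly bounded on rank one projections `p_ξ`
with `ξ` a unit vector in `𝔥 ⊗_alg 𝔥`. -/
def IsTraciallyBounded (J : OperatorTensor E G)
    (d : (E →L[ℂ] E) → (E →L[ℂ] E) → ℂ) : Prop :=
  DFBounded d ∧ ∃ D, IsBoundedBilinear D ∧ ExtendsDF D d ∧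
    ∃ β, IsBetaFor J D β ∧ BetaTraciallyBounded J β

open InnerProductSpace in
theorem rop_ext (J : HilbertTensorProduct E G) {S T : G →L[ℂ] G}
    (h : ∀ a b, S (J.tmul a b) = T (J.tmul a b)) : S = T := by
  refine ContinuousLinearMap.ext_on J.dense_span ?_
  rintro _ ⟨z, rfl⟩
  exact h _ _

open InnerProductSpace in
theorem op_rankOne (J : OperatorTensor E G) (a b c e : E) :
    J.op (rankOne ℂ a b) (rankOne ℂ c e) = rankOne ℂ (J.tmul a c) (J.tmul b e) := by
  refine rop_ext J.toHilbertTensorProduct fun x y => ?_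
  rw [J.op_tmul]
  simp [rankOne_apply, J.inner_tmul, smul_smul]
  ring_nf

theorem op_zero_left (J : OperatorTensor E G) (y : E →L[ℂ] E) : J.op 0 y = 0 := by
  refine rop_ext J.toHilbertTensorProduct fun a b => ?_
  rw [J.op_tmul]; simp

theorem op_zero_right (J : OperatorTensor E G) (y : E →L[ℂ] E) : J.op y 0 = 0 := by
  refine rop_ext J.toHilbertTensorProduct fun a b => ?_
  rw [J.op_tmul]; simp

open InnerProductSpace in
theorem isCompact_rankOne (a b : E) : IsCompactOperator (⇑(rankOne ℂ a b : E →L[ℂ] E)) := by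
  have h : IsCompactOperator (⇑(innerSL ℂ b : E →L[ℂ] ℂ)) :=
    isCompactOperator_of_locallyCompactSpace_dom _
  exact h.clm_comp (ContinuousLinearMap.toSpanSingleton ℂ a)

open InnerProductSpace in
theorem rankOne_mem (J : OperatorTensor E G) {ξ η : G}
    (hξ : ξ ∈ J.toHilbertTensorProduct.algSpan) (hη : η ∈ J.toHilbertTensorProduct.algSpan) :
    rankOne ℂ ξ η ∈ J.compactSpan := by
  unfold HilbertTensorProduct.algSpan at hξ hη
  induction hξ using Submodule.span_induction with
  | zero => simp
  | add x y _ _ h1 h2 => rw [map_add]; exact add_mem h1 h2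
  | smul c x _ h => rw [map_smul]; exact Submodule.smul_mem _ _ h
  | mem x hx =>
    obtain ⟨z, rfl⟩ := hx
    induction hη using Submodule.span_induction with
    | zero => simp
    | add x y _ _ h1 h2 => rw [map_add]; exact add_mem h1 h2
    | smul c x _ h => rw [map_smulₛₗ]; exact Submodule.smul_mem _ _ h
    | mem x hx =>
      obtain ⟨w, rfl⟩ := hx
      refine Submodule.subset_span ⟨rankOne ℂ z.1 w.1, rankOne ℂ z.2 w.2,
        isCompact_rankOne _ _, isCompact_rankOne _ _, ?_⟩
      rw [op_rankOne]

open InnerProductSpace in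
theorem form_bound (W : Submodule ℂ G) (β : (G →L[ℂ] G) →ₗ[ℂ] ℂ) (C : ℝ) (hC : 0 ≤ C)
    (h : ∀ ξ ∈ W, ‖ξ‖ = 1 → ‖β (rankOne ℂ ξ ξ)‖ ≤ C) (ξ η : G) (hξ : ξ ∈ W) (hη : η ∈ W) :
    ‖β (rankOne ℂ η ξ)‖ ≤ (2 * C) * ‖η‖ * ‖ξ‖ := by
  have h1 : ∀ ξ ∈ W, ‖β (rankOne ℂ ξ ξ)‖ ≤ C * (‖ξ‖ * ‖ξ‖) := by
    intro ξ hξ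
    by_cases h0 : ξ = 0
    · simp [h0]
    have hn : ‖ξ‖ ≠ 0 := by simpa using h0
    have := h (((‖ξ‖ : ℂ)⁻¹) • ξ) (W.smul_mem _ hξ) (by
      rw [norm_smul]; simp [hn])
    have e : rankOne ℂ ξ ξ = ((‖ξ‖ : ℂ) * ‖ξ‖) •
        rankOne ℂ (((‖ξ‖ : ℂ)⁻¹) • ξ) (((‖ξ‖ : ℂ)⁻¹) • ξ) := by
      have : (‖ξ‖ : ℂ) ≠ 0 := by exact_mod_cast hn
      simp [map_smulₛₗ, smul_smul]
      field_simp
      simp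
    rw [e, map_smul, norm_smul]
    simp only [norm_mul, Complex.norm_real, norm_norm]
    rw [mul_comm C]
    gcongr
  have h2 : ∀ ξ ∈ W, ∀ η ∈ W, ‖β (rankOne ℂ η ξ)‖ ≤ C * (‖ξ‖ * ‖ξ‖ + ‖η‖ * ‖η‖) := by
    intro ξ hξ η hη
    have e : (4 : ℂ) * β (rankOne ℂ η ξ) =
        β (rankOne ℂ (η + ξ) (η + ξ)) - β (rankOne ℂ (η - ξ) (η - ξ))
        + Complex.I * β (rankOne ℂ (η + Complex.I • ξ) (η + Complex.I • ξ))
        - Complex.I * β (rankOne ℂ (η - Complex.I • ξ) (η - Complex.I • ξ)) := by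
      simp only [map_add, map_sub, map_smulₛₗ, ContinuousLinearMap.add_apply,
        ContinuousLinearMap.sub_apply, ContinuousLinearMap.smul_apply, map_smul, smul_eq_mul,
        Complex.conj_I, RingHom.id_apply]
      ring_nf
      simp
      ring
    have i1 := h1 _ (W.add_mem hη hξ)
    have i2 := h1 _ (W.sub_mem hη hξ)
    have i3 := h1 _ (W.add_mem hη (W.smul_mem Complex.I hξ))
    have i4 := h1 _ (W.sub_mem hη (W.smul_mem Complex.I hξ))
    have p1 := parallelogram_law_with_norm ℂ η ξ
    have p2 := parallelogram_law_with_norm ℂ η (Complex.I • ξ)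
    have hI : ‖Complex.I • ξ‖ = ‖ξ‖ := by simp [norm_smul]
    rw [hI] at p2
    have key : ‖(4 : ℂ) * β (rankOne ℂ η ξ)‖ ≤ ‖β (rankOne ℂ (η + ξ) (η + ξ))‖ +
        ‖β (rankOne ℂ (η - ξ) (η - ξ))‖
        + ‖β (rankOne ℂ (η + Complex.I • ξ) (η + Complex.I • ξ))‖
        + ‖β (rankOne ℂ (η - Complex.I • ξ) (η - Complex.I • ξ))‖ := by
      rw [e]
      refine (norm_sub_le _ _).trans ?_
      refine add_le_add ((norm_add_le _ _).trans (add_le_add (norm_sub_le _ _) ?_)) ?_ <;> simp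
    rw [norm_mul, show ‖(4 : ℂ)‖ = 4 by norm_num] at key
    have p3 := congrArg (fun t => C * t) p1
    have p4 := congrArg (fun t => C * t) p2
    simp only [pow_two] at p3 p4
    linarith
  by_cases h0 : ξ = 0
  · simp [h0]
  by_cases h0' : η = 0
  · simp [h0']
  have hn : ‖ξ‖ ≠ 0 := by simpa using h0
  have hn' : ‖η‖ ≠ 0 := by simpa using h0'
  have hc : (‖ξ‖ : ℂ) ≠ 0 := by exact_mod_cast hn
  have hc' : (‖η‖ : ℂ) ≠ 0 := by exact_mod_cast hn'
  have := h2 (((‖ξ‖ : ℂ)⁻¹) • ξ) (W.smul_mem _ hξ) (((‖η‖ : ℂ)⁻¹) • η) (W.smul_mem _ hη)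
  have e : rankOne ℂ η ξ = ((‖η‖ : ℂ) * ‖ξ‖) •
        rankOne ℂ (((‖η‖ : ℂ)⁻¹) • η) (((‖ξ‖ : ℂ)⁻¹) • ξ) := by
      simp [map_smulₛₗ, smul_smul]
      field_simp
      simp
  rw [norm_smul, norm_smul] at this
  simp [hn, hn'] at this
  rw [e, map_smul, norm_smul]
  simp only [norm_mul, Complex.norm_real, norm_norm]
  calc _ ≤ ‖η‖ * ‖ξ‖ * (C * (1 + 1)) := by
        gcongr
        simpa [map_smulₛₗ, mul_left_comm] using this
    _ = _ := by ring

open InnerProductSpace in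
theorem exists_op (W : Submodule ℂ G) (hW : Dense (W : Set G)) (β : (G →L[ℂ] G) →ₗ[ℂ] ℂ) (C : ℝ)
    (h : ∀ ξ ∈ W, ∀ η ∈ W, ‖β (rankOne ℂ η ξ)‖ ≤ C * ‖η‖ * ‖ξ‖) :
    ∃ M : G →L[ℂ] G, ∀ ξ ∈ W, ∀ η ∈ W, ⟪ξ, M η⟫ = β (rankOne ℂ η ξ) := by
  have hWr : DenseRange (W.subtypeL : W → G) := by
    simpa [DenseRange] using hW
  have hui : IsUniformInducing (W.subtypeL : W → G) := isUniformInducing_val _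
  have hcl : ∀ v w : G, (∀ ξ ∈ W, ⟪ξ, v⟫ = ⟪ξ, w⟫) → v = w := by
    intro v w hvw
    exact hW.eq_of_inner_right (𝕜 := ℂ) (by simpa using hvw)
  have hex : ∀ η : W, ∃ v : G, ∀ ξ ∈ W, ⟪ξ, v⟫ = β (rankOne ℂ (η : G) ξ) := by
    intro η
    let f₀ : W →ₗ[ℂ] ℂ :=
      { toFun := fun ξ => starRingEnd ℂ (β (rankOne ℂ (η : G) (ξ : G)))
        map_add' := by intro x y; simp
        map_smul' := by intro c x; simp [map_smulₛₗ] }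
    let f : W →L[ℂ] ℂ := f₀.mkContinuous (C * ‖(η : G)‖) (by
      intro ξ
      simpa [f₀] using h ξ ξ.2 η η.2)
    let g : G →L[ℂ] ℂ := f.extend W.subtypeL
    refine ⟨(toDual ℂ G).symm g, fun ξ hξ => ?_⟩
    rw [← inner_conj_symm, toDual_symm_apply]
    have : g ξ = f ⟨ξ, hξ⟩ := f.extend_eq hWr hui ⟨ξ, hξ⟩
    rw [this]
    simp [f, f₀]
  choose T hT using hex
  let T₀ : W →ₗ[ℂ] G :=
    { toFun := T
      map_add' := by
        intro x y
        refine hcl _ _ fun ξ hξ => ?_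
        simp [inner_add_right, hT _ ξ hξ]
      map_smul' := by
        intro c x
        refine hcl _ _ fun ξ hξ => ?_
        simp [inner_smul_right, hT _ ξ hξ] }
  have hb : ∀ η : W, ‖T₀ η‖ ≤ C * ‖η‖ := by
    intro η
    have h1 : ∀ ξ : G, ‖⟪ξ, T η⟫‖ ≤ C * ‖(η : G)‖ * ‖ξ‖ := by
      intro ξ
      refine hW.induction (P := fun ξ => ‖⟪ξ, T η⟫‖ ≤ C * ‖(η : G)‖ * ‖ξ‖) ?_ ?_ ξ
      · intro ξ hξ
        rw [hT _ _ hξ]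
        exact h _ hξ _ η.2
      · exact isClosed_le (by fun_prop) (by fun_prop)
    have h2 := h1 (T η)
    rw [inner_self_eq_norm_sq_to_K] at h2
    simp only [norm_pow] at h2
    simp at h2
    change ‖T η‖ ≤ C * ‖(η : G)‖
    by_cases h0 : ‖T η‖ = 0
    · have := h η η.2 η η.2
      by_cases h3 : ‖(η : G)‖ = 0
      · rw [h0, h3]; simp
      · have h4 : 0 ≤ C * ‖(η : G)‖ * ‖(η : G)‖ := (norm_nonneg _).trans this
        have h5 : 0 < ‖(η : G)‖ := lt_of_le_of_ne (norm_nonneg _) (Ne.symm h3)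
        rw [h0]
        exact nonneg_of_mul_nonneg_left h4 h5
    · have h5 : 0 < ‖T η‖ := lt_of_le_of_ne (norm_nonneg _) (Ne.symm h0)
      rw [pow_two] at h2
      exact le_of_mul_le_mul_right h2 h5
  let T₁ : W →L[ℂ] G := T₀.mkContinuous C hb
  refine ⟨T₁.extend W.subtypeL, fun ξ hξ η hη => ?_⟩
  have : T₁.extend W.subtypeL η = T₁ ⟨η, hη⟩ := T₁.extend_eq hWr hui ⟨η, hη⟩
  rw [this]
  exact hT ⟨η, hη⟩ ξ hξ

open InnerProductSpace in
theorem finite_rank_decomp {p : E →L[ℂ] E} (hp : IsOrthoProj p) (hf : HasFiniteRank p) :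
    ∃ (n : ℕ) (e : Fin n → E), p = ∑ k, rankOne ℂ (e k) (e k) := by
  unfold HasFiniteRank at hf
  set R := LinearMap.range (p : E →ₗ[ℂ] E) with hR
  let b := stdOrthonormalBasis ℂ R
  refine ⟨_, fun k => (b k : E), ?_⟩
  ext x
  have h1 := b.sum_repr ⟨p x, ⟨x, rfl⟩⟩
  have h2 := congrArg (Subtype.val) h1
  simp only [Submodule.coe_sum] at h2
  rw [← h2]
  simp only [ContinuousLinearMap.sum_apply, rankOne_apply]
  refine Finset.sum_congr rfl fun k _ => ?_
  rw [OrthonormalBasis.repr_apply_apply, Submodule.coe_smul, Submodule.coe_inner]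
  obtain ⟨y, hy⟩ := (b k).2
  have hpk : p (b k : E) = b k := by
    rw [← hy]
    change p (p y) = p y
    exact congrArg (fun T : E →L[ℂ] E => T y) hp.1
  congr 1
  have := ContinuousLinearMap.adjoint_inner_left p x (b k : E)
  rw [← ContinuousLinearMap.star_eq_adjoint, hp.2.star_eq, hpk] at this
  exact this.symm

open InnerProductSpace in
theorem op_decomp (J : OperatorTensor E G) {n m : ℕ} (e : Fin n → E) (f : Fin m → E) :
    J.op (∑ k, rankOne ℂ (e k) (e k)) (∑ l, rankOne ℂ (f l) (f l)) =
      ∑ k, ∑ l, rankOne ℂ (J.tmul (e k) (f l)) (J.tmul (e k) (f l)) := by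
  refine rop_ext J.toHilbertTensorProduct fun a b => ?_
  rw [J.op_tmul]
  simp only [ContinuousLinearMap.sum_apply, map_sum, LinearMap.sum_apply]
  rw [Finset.sum_comm]
  refine Finset.sum_congr rfl fun k _ => Finset.sum_congr rfl fun l _ => ?_
  rw [← op_rankOne, J.op_tmul]

open InnerProductSpace in
theorem trace_rankOne {ι : Type*} (bG : HilbertBasis ι ℂ G) (M : G →L[ℂ] G) (u v : G) :
    HasSum (fun i => ⟪bG i, (rankOne ℂ u v * M) (bG i)⟫) ⟪v, M u⟫ := by
  have := bG.hasSum_inner_mul_inner (ContinuousLinearMap.adjoint M v) u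
  rw [ContinuousLinearMap.adjoint_inner_left] at this
  have e : ∀ i, ⟪bG i, (rankOne ℂ u v * M) (bG i)⟫ =
      ⟪ContinuousLinearMap.adjoint M v, bG i⟫ * ⟪bG i, u⟫ := fun i => by
    simp [rankOne_apply, inner_smul_right, ContinuousLinearMap.adjoint_inner_left]
  simpa only [e] using this

open InnerProductSpace in
theorem trace_op {ι : Type*} (bG : HilbertBasis ι ℂ G) (M : G →L[ℂ] G) (J : OperatorTensor E G)
    {n m : ℕ} (e : Fin n → E) (f : Fin m → E) :
    traceAlong bG (J.op (∑ k, rankOne ℂ (e k) (e k)) (∑ l, rankOne ℂ (f l) (f l)) * M) =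
      ∑ k, ∑ l, ⟪J.tmul (e k) (f l), M (J.tmul (e k) (f l))⟫ := by
  rw [op_decomp]
  refine HasSum.tsum_eq ?_
  have := hasSum_sum (s := Finset.univ) fun (k : Fin n) _ =>
    hasSum_sum (s := Finset.univ) fun (l : Fin m) _ =>
      trace_rankOne bG M (J.tmul (e k) (f l)) (J.tmul (e k) (f l))
  convert this using 2 with i
  simp [Finset.sum_mul, ContinuousLinearMap.sum_apply, inner_sum]

theorem isOrthoProj_zero : IsOrthoProj (0 : E →L[ℂ] E) :=
  ⟨by simp [IsIdempotentElem], IsSelfAdjoint.zero _⟩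

open InnerProductSpace in
theorem isOrthoProj_rankOne {a : E} (ha : ‖a‖ = 1) : IsOrthoProj (rankOne ℂ a a) := by
  refine ⟨?_, ?_⟩
  · ext x
    simp [rankOne_apply, inner_smul_right, ha, inner_self_eq_norm_sq_to_K]
  · rw [IsSelfAdjoint, ContinuousLinearMap.star_eq_adjoint, adjoint_rankOne]

open InnerProductSpace in
theorem finRank_rankOne (a : E) : HasFiniteRank (rankOne ℂ a a) := by
  unfold HasFiniteRank
  refine Submodule.finiteDimensional_of_le (S₂ := Submodule.span ℂ {a}) ?_
  rintro _ ⟨x, rfl⟩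
  simp [rankOne_apply]
  exact Submodule.smul_mem _ _ (Submodule.mem_span_singleton_self a)

theorem finRank_zero : HasFiniteRank (0 : E →L[ℂ] E) := by
  unfold HasFiniteRank
  rw [ContinuousLinearMap.toLinearMap_zero, LinearMap.range_zero]
  infer_instance

theorem quad_zero (f : E → E → ℂ) (hadd : ∀ a b c, f (a + b) c = f a c + f b c)
    (hadd' : ∀ a b c, f c (a + b) = f c a + f c b)
    (hI : ∀ a c, f (Complex.I • a) c = - Complex.I * f a c)
    (hI' : ∀ a c, f c (Complex.I • a) = Complex.I * f c a)
    (h : ∀ a, f a a = 0) (a b : E) : f a b = 0 := by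
  have h1 := h (a + b)
  have h2 := h (a + Complex.I • b)
  simp only [hadd, hadd', hI, hI', h] at h1 h2
  have hb : Complex.I * Complex.I = -1 := Complex.I_mul_I
  have h3 : f a b = f b a := by
    have : Complex.I * (f a b - f b a) = 0 := by linear_combination h2
    rcases mul_eq_zero.1 this with h | h
    · exact absurd h Complex.I_ne_zero
    · linear_combination h
  linear_combination h1 / 2 + h3 / 2

/-- For a countably additive, tracially bounded decoherence
functional `d` on a separable Hilbert space of dimension greater than two there
is a unique bounded operator `𝔐` on `𝔥 ⊗ 𝔥` such that whenever projections
`p, q` are (strong) sums of orthogonal families `{pₙ}, {qₙ}` of finite rank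
projections, `d(p,q) = ∑ᵢ∑ⱼ tr((pᵢ ⊗ qⱼ) 𝔐)`. -/
theorem stmt_13 [TopologicalSpace.SeparableSpace E] (hdim : 2 < Module.rank ℂ E)
    (d : (E →L[ℂ] E) → (E →L[ℂ] E) → ℂ) (hd : IsDecoherenceFunctional d)
    (hca : DFCountablyAdditive d)
    (J : OperatorTensor E G) (htb : IsTraciallyBounded J d)
    {ι : Type u} (bG : HilbertBasis ι ℂ G) :
    ∃! M : G →L[ℂ] G,
      ∀ p q : E →L[ℂ] E, IsOrthoProj p → IsOrthoProj q →
      ∀ pn qn : ℕ → E →L[ℂ] E,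
        (∀ n, IsOrthoProj (pn n) ∧ HasFiniteRank (pn n)) →
        (∀ n, IsOrthoProj (qn n) ∧ HasFiniteRank (qn n)) →
        (∀ m n, m ≠ n → pn m * pn n = 0) →
        (∀ m n, m ≠ n → qn m * qn n = 0) →
        (∀ x : E, HasSum (fun n => pn n x) (p x)) →
        (∀ x : E, HasSum (fun n => qn n x) (q x)) →
        (∀ i, Summable fun j => traceAlong bG (J.op (pn i) (qn j) * M)) ∧
        HasSum (fun i => ∑' j, traceAlong bG (J.op (pn i) (qn j) * M)) (d p q) := by
  classical
  obtain ⟨-, D, -, hDd, β₀, hβ, C₀, hC₀⟩ := htb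
  obtain ⟨β, hββ⟩ := LinearMap.exists_extend β₀
  have hβ' : ∀ T (hT : T ∈ J.compactSpan), β T = β₀ ⟨T, hT⟩ := fun T hT => by
    rw [← hββ]; rfl
  let W := J.toHilbertTensorProduct.algSpan
  have hW : Dense (W : Set G) := J.dense_span
  have htW : ∀ a b, J.tmul a b ∈ W := fun a b => Submodule.subset_span ⟨(a, b), rfl⟩
  obtain ⟨M, hM⟩ := exists_op W hW β (2 * |C₀|) (fun ξ hξ η hη =>
    form_bound W β |C₀| (abs_nonneg _) (fun ξ hξ h1 => by
      have hm := rankOne_mem J hξ hξ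
      rw [hβ' _ hm]
      exact (hC₀ ξ hξ h1 hm).trans (le_abs_self _)) ξ η hξ hη)
  have htr : ∀ p q : E →L[ℂ] E, IsOrthoProj p → IsOrthoProj q → HasFiniteRank p →
      HasFiniteRank q → traceAlong bG (J.op p q * M) = d p q := by
    intro p q hp hq hpf hqf
    obtain ⟨n, e, he⟩ := finite_rank_decomp hp hpf
    obtain ⟨m, f, hf⟩ := finite_rank_decomp hq hqf
    have hpc : IsCompactOperator (⇑p) := by
      have : p ∈ compactOperator (RingHom.id ℂ) E E := by
        rw [he]; exact Submodule.sum_mem _ fun k _ => isCompact_rankOne _ _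
      exact this
    have hqc : IsCompactOperator (⇑q) := by
      have : q ∈ compactOperator (RingHom.id ℂ) E E := by
        rw [hf]; exact Submodule.sum_mem _ fun k _ => isCompact_rankOne _ _
      exact this
    have hm : J.op p q ∈ J.compactSpan := Submodule.subset_span ⟨p, q, hpc, hqc, rfl⟩
    rw [← hDd p q hp hq, ← hβ p q hpc hqc hm, ← hβ' _ hm, he, hf, trace_op, op_decomp]
    simp only [map_sum]
    refine Finset.sum_congr rfl fun k _ => Finset.sum_congr rfl fun l _ => ?_
    exact hM _ (htW _ _) _ (htW _ _)
  refine ⟨M, ?_, ?_⟩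
  · intro p q hp hq pn qn hpn hqn hpo hqo hps hqs
    have h1 : ∀ i, HasSum (fun j => traceAlong bG (J.op (pn i) (qn j) * M)) (d (pn i) q) := by
      intro i
      have := hca qn q (pn i) (fun j => (hqn j).1) hq (hpn i).1 hqo hqs
      have := (Complex.hasSum_conj' ).2 this
      rw [hd.hermitian _ _ (hpn i).1 hq]
      convert this using 2 with j
      rw [htr _ _ (hpn i).1 (hqn j).1 (hpn i).2 (hqn j).2, hd.hermitian _ _ (hpn i).1 (hqn j).1]
    refine ⟨fun i => (h1 i).summable, ?_⟩
    simp only [fun i => (h1 i).tsum_eq]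
    exact hca pn p q (fun j => (hpn j).1) hp hq hpo hps
  · intro M' hM'
    have hq : ∀ a b : E, ‖a‖ = 1 → ‖b‖ = 1 →
        ⟪J.tmul a b, M' (J.tmul a b)⟫ = ⟪J.tmul a b, M (J.tmul a b)⟫ := by
      intro a b ha hb
      have hpa := isOrthoProj_rankOne ha
      have hpb := isOrthoProj_rankOne hb
      have htr1 : ∀ N : G →L[ℂ] G, traceAlong bG (J.op (InnerProductSpace.rankOne ℂ a a)
          (InnerProductSpace.rankOne ℂ b b) * N) = ⟪J.tmul a b, N (J.tmul a b)⟫ := by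
        intro N
        have := trace_op bG N J (fun _ : Fin 1 => a) (fun _ : Fin 1 => b)
        simpa using this
      have hs : ∀ (r : E →L[ℂ] E) (hr : IsOrthoProj r) (hf : HasFiniteRank r),
          (∀ n : ℕ, IsOrthoProj (if n = 0 then r else 0) ∧
            HasFiniteRank (if n = 0 then r else 0)) ∧
          (∀ m n : ℕ, m ≠ n → (if m = 0 then r else 0) * (if n = 0 then r else 0) = 0) ∧
          (∀ x, HasSum (fun n : ℕ => (if n = 0 then r else 0) x) (r x)) := by
        intro r hr hf
        refine ⟨fun n => ?_, fun m n hmn => ?_, fun x => ?_⟩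
        · split_ifs
          · exact ⟨hr, hf⟩
          · exact ⟨isOrthoProj_zero, finRank_zero⟩
        · by_cases h : m = 0
          · have : n ≠ 0 := fun h' => hmn (h.trans h'.symm)
            simp [this]
          · simp [h]
        · have := hasSum_ite_eq (0 : ℕ) (r x)
          convert this using 2 with n
          split_ifs <;> simp
      obtain ⟨s1, s2, s3⟩ := hs _ hpa (finRank_rankOne a)
      obtain ⟨t1, t2, t3⟩ := hs _ hpb (finRank_rankOne b)
      have key := (hM' _ _ hpa hpb _ _ s1 t1 s2 t2 s3 t3).2
      have hz : ∀ N : G →L[ℂ] G, traceAlong bG (0 * N) = 0 := by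
        intro N; simp [traceAlong]
      have k2 : HasSum (fun i : ℕ => ∑' j : ℕ, traceAlong bG
          (J.op (if i = 0 then InnerProductSpace.rankOne ℂ a a else 0)
            (if j = 0 then InnerProductSpace.rankOne ℂ b b else 0) * M'))
          ⟪J.tmul a b, M' (J.tmul a b)⟫ := by
        have := hasSum_ite_eq (0 : ℕ) (⟪J.tmul a b, M' (J.tmul a b)⟫)
        convert this using 2 with i
        split_ifs with hi
        · rw [tsum_eq_single 0]
          · rw [if_pos rfl, htr1]
          · intro j hj
            rw [if_neg hj, op_zero_right, hz]
        · simp [op_zero_left, hz]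
      rw [k2.unique key, ← htr _ _ hpa hpb (finRank_rankOne a) (finRank_rankOne b), htr1]
    let N := M' - M
    have hN1 : ∀ a b : E, ⟪J.tmul a b, N (J.tmul a b)⟫ = 0 := by
      intro a b
      by_cases ha : a = 0
      · simp [ha]
      by_cases hb : b = 0
      · simp [hb]
      have ha' : (‖a‖ : ℂ) ≠ 0 := by simpa using ha
      have hb' : (‖b‖ : ℂ) ≠ 0 := by simpa using hb
      have := hq ((‖a‖ : ℂ)⁻¹ • a) ((‖b‖ : ℂ)⁻¹ • b)
        (by rw [norm_smul]; simp [ha]) (by rw [norm_smul]; simp [hb])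
      simp only [map_smul, LinearMap.smul_apply, inner_smul_left, inner_smul_right] at this
      simp [ha, hb] at this
      simp [N, inner_sub_right, this]
    have hN2 : ∀ a b c e : E, ⟪J.tmul a b, N (J.tmul c e)⟫ = 0 := by
      have hN3 : ∀ a c b, ⟪J.tmul a b, N (J.tmul c b)⟫ = 0 := by
        intro a c b
        refine quad_zero (fun a c => ⟪J.tmul a b, N (J.tmul c b)⟫) ?_ ?_ ?_ ?_ ?_ a c
        · intros; simp [inner_add_left]
        · intros; simp [inner_add_right]
        · intros; simp [inner_smul_left, mul_comm]
        · intros; simp [inner_smul_right]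
        · intro a; exact hN1 a b
      intro a b c e
      refine quad_zero (fun b e => ⟪J.tmul a b, N (J.tmul c e)⟫) ?_ ?_ ?_ ?_ ?_ b e
      · intros; simp [inner_add_left]
      · intros; simp [inner_add_right]
      · intros; simp [inner_smul_left, mul_comm]
      · intros; simp [inner_smul_right]
      · intro b; exact hN3 a c b
    have hN0 : N = 0 := by
      refine rop_ext J.toHilbertTensorProduct fun c e => ?_
      refine hW.eq_of_inner_right (𝕜 := ℂ) fun ξ => ?_
      intro hξ
      have hξ' : ξ ∈ Submodule.span ℂ (Set.range fun z : E × E => J.tmul z.1 z.2) := hξ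
      induction hξ' using Submodule.span_induction with
      | zero => simp
      | add x y hx hy h1 h2 => rw [inner_add_left, inner_add_left, h1 hx, h2 hy]
      | smul k x hx h => rw [inner_smul_left, inner_smul_left, h hx]
      | mem x hx =>
        obtain ⟨z, rfl⟩ := hx
        simp [hN2]
    exact sub_eq_zero.1 hN0
end
end

section
/- Let 𝔥 be a separable, infinite dimensional complex Hilbert space and ψ a unit vector in 𝔥, and let d_ψ(p,q) := ⟨pψ, qψ⟩ for projections p,q on 𝔥. Then d_ψ is tracially bounded; that is, there is a constant C such that |β_ψ(p_ξ)| ≤ C for every unit vector ξ in the algebraic tensor product 𝔥 ⊗_alg 𝔥, where β_ψ is the linear functional on K(𝔥) • K(𝔥) associated with d_ψ. Consequently tracial boundedness is a strictly weaker condition than tensor boundedness. -/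
/- Common background definitions: decoherence functionals on the projection
lattice of a complex Hilbert space, boundedness/additivity notions, trace class
operators, and an axiomatisation of the Hilbert space tensor product
`𝔥 ⊗ 𝔥` together with the operator tensor product. -/

noncomputable section

open scoped ComplexInnerProductSpace ComplexOrder
open ContinuousLinearMap

universe u

variable {E : Type u} [NormedAddCommGroup E] [InnerProductSpace ℂ E] [CompleteSpace E]
variable {G : Type u} [NormedAddCommGroup G] [InnerProductSpace ℂ G] [CompleteSpace G]

/-- The rank one operator `z ↦ ⟪b, z⟫ a`. -/
def rkOp {H : Type*} [NormedAddCommGroup H] [InnerProductSpace ℂ H] (a b : H) : H →L[ℂ] H :=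
  (innerSL ℂ b).smulRight a

theorem rkOp_apply {H : Type*} [NormedAddCommGroup H] [InnerProductSpace ℂ H] (a b z : H) :
    rkOp a b z = ⟪b, z⟫ • a := by
  simp [rkOp]

theorem rkOp_compact {H : Type*} [NormedAddCommGroup H] [InnerProductSpace ℂ H] (a b : H) :
    IsCompactOperator (⇑(rkOp a b)) := by
  have h : IsCompactOperator (⇑(ContinuousLinearMap.toSpanSingleton ℂ a)) :=
    ⟨_, (isCompact_closedBall (0 : ℂ) 1).image
      (ContinuousLinearMap.toSpanSingleton ℂ a).continuous, by
      refine Filter.mem_of_superset (Metric.closedBall_mem_nhds (0 : ℂ) one_pos) ?_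
      exact Set.subset_preimage_image _ _⟩
  have h2 := h.comp_clm (innerSL ℂ b)
  have h3 : ⇑(rkOp a b) = ⇑(ContinuousLinearMap.toSpanSingleton ℂ a) ∘ ⇑(innerSL ℂ b) := by
    funext z
    simp [rkOp_apply]
  rw [h3]
  exact h2

theorem rkOp_isOrthoProj (a : E) (ha : ‖a‖ = 1) : IsOrthoProj (rkOp a a) := by
  have haa : ⟪a, a⟫ = (1 : ℂ) := by
    rw [inner_self_eq_norm_sq_to_K, ha]; simp
  constructor
  · ext z
    simp [rkOp_apply, ha]
  · rw [ContinuousLinearMap.isSelfAdjoint_iff_isSymmetric]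
    intro x y
    simp [rkOp_apply, inner_smul_left, inner_smul_right]
    ring

theorem rkOp_self_eq_smul (a : E) :
    ∃ (c : ℂ) (v : E), IsOrthoProj (rkOp v v) ∧ rkOp a a = c • rkOp v v := by
  by_cases h : a = 0
  · refine ⟨0, a, ?_, ?_⟩
    · subst h
      have : rkOp (0 : E) 0 = 0 := by ext z; simp [rkOp_apply]
      rw [this]
      exact ⟨IsIdempotentElem.zero, IsSelfAdjoint.zero _⟩
    · ext z; simp [rkOp_apply, h]
  · have hn : ‖a‖ ≠ 0 := norm_ne_zero_iff.mpr h
    have hn' : (‖a‖ : ℂ) ≠ 0 := by exact_mod_cast hn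
    refine ⟨(‖a‖ : ℂ) ^ 2, ((‖a‖ : ℂ)⁻¹) • a, rkOp_isOrthoProj _ ?_, ?_⟩
    · rw [norm_smul]; simp [hn]
    · ext z
      simp only [rkOp_apply, ContinuousLinearMap.smul_apply, inner_smul_left, smul_smul]
      congr 1
      simp
      field_simp

theorem rkOp_polar (a b : E) : rkOp a b = (1 / 4 : ℂ) •
    (rkOp (a + b) (a + b) - rkOp (a - b) (a - b)
      + Complex.I • rkOp (a + Complex.I • b) (a + Complex.I • b)
      - Complex.I • rkOp (a - Complex.I • b) (a - Complex.I • b)) := by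
  ext z
  simp only [rkOp_apply, ContinuousLinearMap.smul_apply, ContinuousLinearMap.add_apply,
    ContinuousLinearMap.sub_apply, inner_add_left, inner_sub_left, inner_smul_left,
    Complex.conj_I]
  match_scalars
  · linear_combination ((1/2 : ℂ) * ⟪b, z⟫) * Complex.I_sq
  · linear_combination (-(1/2 : ℂ) * ⟪a, z⟫) * Complex.I_sq

theorem D_rkOp {ψ : E} {D : (E →L[ℂ] E) →ₗ[ℂ] (E →L[ℂ] E) →ₗ[ℂ] ℂ}
    (hDd : ExtendsDF D (fun p q : E →L[ℂ] E => ⟪q ψ, p ψ⟫)) (a a' b b' : E) :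
    D (rkOp a a') (rkOp b b') = ⟪ψ, b⟫ * ⟪b', a⟫ * ⟪a', ψ⟫ := by
  have h1 : ∀ a b : E, D (rkOp a a) (rkOp b b) = ⟪ψ, rkOp b b (rkOp a a ψ)⟫ := by
    intro a b
    obtain ⟨c, v, hv, hc⟩ := rkOp_self_eq_smul a
    obtain ⟨c', w, hw, hc'⟩ := rkOp_self_eq_smul b
    have h := hDd _ _ hv hw
    have hs := (ContinuousLinearMap.isSelfAdjoint_iff_isSymmetric.mp hw.2) ψ (rkOp v v ψ)
    simp only [ContinuousLinearMap.coe_coe] at hs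
    rw [hc, hc']
    simp only [map_smul, LinearMap.smul_apply, ContinuousLinearMap.smul_apply, h,
      inner_smul_right, hs, smul_eq_mul]
    ring
  have h2 : ∀ a a' b : E, D (rkOp a a') (rkOp b b) = ⟪ψ, rkOp b b (rkOp a a' ψ)⟫ := by
    intro a a' b
    rw [rkOp_polar a a']
    simp only [map_smul, map_add, map_sub, LinearMap.smul_apply, LinearMap.add_apply,
      LinearMap.sub_apply, ContinuousLinearMap.smul_apply, ContinuousLinearMap.add_apply,
      ContinuousLinearMap.sub_apply, h1, inner_smul_right, inner_add_right, inner_sub_right,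
      smul_eq_mul]
  have h3 : D (rkOp a a') (rkOp b b') = ⟪ψ, rkOp b b' (rkOp a a' ψ)⟫ := by
    rw [rkOp_polar b b']
    simp only [map_smul, map_add, map_sub, ContinuousLinearMap.smul_apply,
      ContinuousLinearMap.add_apply,
      ContinuousLinearMap.sub_apply, h2, inner_smul_right, inner_add_right, inner_sub_right,
      smul_eq_mul]
  rw [h3]
  simp only [rkOp_apply, inner_smul_right]
  ring

theorem op_rkOp (J : OperatorTensor E G) (a a' b b' : E) :
    J.op (rkOp a a') (rkOp b b') = rkOp (J.tmul a b) (J.tmul a' b') := by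
  apply ContinuousLinearMap.ext_on J.dense_span
  rintro _ ⟨⟨c, d⟩, rfl⟩
  simp only [J.op_tmul, rkOp_apply, J.inner_tmul, map_smul, LinearMap.smul_apply, smul_smul]
  rw [mul_comm]

theorem mem_compactSpan (J : OperatorTensor E G) (a a' b b' : E) :
    rkOp (J.tmul a b) (J.tmul a' b') ∈ J.compactSpan := by
  rw [← op_rkOp]
  exact Submodule.subset_span ⟨_, _, rkOp_compact _ _, rkOp_compact _ _, rfl⟩

theorem beta_rkOp {ψ : E} {J : OperatorTensor E G}
    {D : (E →L[ℂ] E) →ₗ[ℂ] (E →L[ℂ] E) →ₗ[ℂ] ℂ}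
    (hDd : ExtendsDF D (fun p q : E →L[ℂ] E => ⟪q ψ, p ψ⟫))
    {β : ↥J.compactSpan →ₗ[ℂ] ℂ} (hβ : IsBetaFor J D β) (a a' b b' : E) :
    β ⟨rkOp (J.tmul a b) (J.tmul a' b'), mem_compactSpan J a a' b b'⟩
      = ⟪ψ, b⟫ * ⟪b', a⟫ * ⟪a', ψ⟫ := by
  have h := hβ (rkOp a a') (rkOp b b') (rkOp_compact _ _) (rkOp_compact _ _)
    (Submodule.subset_span ⟨_, _, rkOp_compact _ _, rkOp_compact _ _, rfl⟩)
  rw [D_rkOp hDd] at h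
  rw [← h]
  congr 1
  exact Subtype.ext (op_rkOp J a a' b b').symm

theorem exists_sum_tmul (J : HilbertTensorProduct E G) (ξ : G) (h : ξ ∈ J.algSpan) :
    ∃ (n : ℕ) (a b : Fin n → E), ξ = ∑ i, J.tmul (a i) (b i) := by
  obtain ⟨n, c, g, hg⟩ := (Submodule.mem_span_set' (R := ℂ)).mp h
  have : ∀ i, ∃ z : E × E, J.tmul z.1 z.2 = (g i : G) := fun i => (g i).2
  choose z hz using this
  refine ⟨n, fun i => c i • (z i).1, fun i => (z i).2, ?_⟩
  rw [← hg]
  refine Finset.sum_congr rfl fun i _ => ?_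
  rw [map_smul, LinearMap.smul_apply, hz]

theorem norm_tmul' (J : HilbertTensorProduct E G) (a b : E) :
    ‖J.tmul a b‖ = ‖a‖ * ‖b‖ := by
  have h := J.inner_tmul a b a b
  rw [inner_self_eq_norm_sq_to_K, inner_self_eq_norm_sq_to_K, inner_self_eq_norm_sq_to_K] at h
  have h' : ‖J.tmul a b‖ ^ 2 = ‖a‖ ^ 2 * ‖b‖ ^ 2 := by
    simp only [Complex.coe_algebraMap] at h
    exact_mod_cast h
  rw [← mul_pow] at h'
  exact (pow_left_inj₀ (norm_nonneg _) (by positivity) two_ne_zero).mp h'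

theorem beta_tracially {ψ : E} (hψ : ‖ψ‖ = 1) {J : OperatorTensor E G}
    {D : (E →L[ℂ] E) →ₗ[ℂ] (E →L[ℂ] E) →ₗ[ℂ] ℂ}
    (hDd : ExtendsDF D (fun p q : E →L[ℂ] E => ⟪q ψ, p ψ⟫))
    {β : ↥J.compactSpan →ₗ[ℂ] ℂ} (hβ : IsBetaFor J D β) : BetaTraciallyBounded J β := by
  refine ⟨1, fun ξ hξ hn hm => ?_⟩
  obtain ⟨n, a, b, hab⟩ := exists_sum_tmul _ ξ hξ
  have hsum : (⟨rankOneProj ξ, hm⟩ : ↥J.compactSpan) = ∑ i, ∑ j,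
      ⟨rkOp (J.tmul (a i) (b i)) (J.tmul (a j) (b j)),
        mem_compactSpan J (a i) (a j) (b i) (b j)⟩ := by
    apply Subtype.ext
    simp only [Submodule.coe_sum]
    ext z
    have : rankOneProj ξ z = ⟪ξ, z⟫ • ξ := rkOp_apply ξ ξ z
    rw [this]
    simp only [ContinuousLinearMap.sum_apply, rkOp_apply]
    conv_lhs => rw [hab]
    simp only [sum_inner, ← Finset.sum_smul, ← Finset.smul_sum]
  set u : E := ∑ i, ⟪ψ, b i⟫ • a i with hu
  have hval : β ⟨rankOneProj ξ, hm⟩ = ⟪ξ, J.tmul ψ u⟫ := by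
    rw [hsum, map_sum]
    simp only [map_sum, beta_rkOp hDd hβ]
    rw [hab, sum_inner, Finset.sum_comm]
    refine Finset.sum_congr rfl fun j _ => ?_
    rw [J.inner_tmul, hu, inner_sum, Finset.mul_sum]
    refine Finset.sum_congr rfl fun i _ => ?_
    rw [inner_smul_right]; ring
  have hu2 : ⟪u, u⟫ = ⟪J.tmul u ψ, ξ⟫ := by
    conv_rhs => rw [hab, inner_sum]
    conv_lhs => rw [hu, inner_sum, ← hu]
    refine Finset.sum_congr rfl fun i _ => ?_
    rw [J.inner_tmul, inner_smul_right]; ring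
  have hule : ‖u‖ ≤ 1 := by
    have h1 : ‖u‖ * ‖u‖ ≤ ‖u‖ := by
      calc ‖u‖ * ‖u‖ = ‖⟪u, u⟫‖ := by
            rw [inner_self_eq_norm_sq_to_K]; simp [sq]
        _ ≤ ‖J.tmul u ψ‖ * ‖ξ‖ := by rw [hu2]; exact norm_inner_le_norm _ _
        _ = ‖u‖ := by rw [norm_tmul', hψ, hn]; ring
    nlinarith [norm_nonneg u]
  rw [hval]
  calc _ ≤ ‖ξ‖ * ‖J.tmul ψ u‖ := norm_inner_le_norm _ _
    _ ≤ 1 := by rw [hn, norm_tmul', hψ]; linarith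

theorem isOrthoProj_apply_le {p : E →L[ℂ] E} (hp : IsOrthoProj p) (x : E) : ‖p x‖ ≤ ‖x‖ := by
  have hs := (ContinuousLinearMap.isSelfAdjoint_iff_isSymmetric.mp hp.2) x (p x)
  simp only [ContinuousLinearMap.coe_coe] at hs
  have hi : p (p x) = p x := by
    have := congrArg (fun T : E →L[ℂ] E => T x) hp.1
    simpa using this
  rw [hi] at hs
  have h1 : ‖p x‖ * ‖p x‖ ≤ ‖x‖ * ‖p x‖ := by
    calc ‖p x‖ * ‖p x‖ = ‖⟪p x, p x⟫‖ := by
          rw [inner_self_eq_norm_sq_to_K]; simp [sq]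
      _ ≤ ‖x‖ * ‖p x‖ := by rw [hs]; exact norm_inner_le_norm _ _
  by_contra hlt
  push Not at hlt
  nlinarith [norm_nonneg x]

theorem exists_orthonormal_fin (hinf : ¬ FiniteDimensional ℂ E) (n : ℕ) :
    ∃ e : Fin n → E, Orthonormal ℂ e := by
  obtain ⟨w, b, hb⟩ := exists_hilbertBasis ℂ E
  have hw : w.Infinite := by
    intro hfin
    haveI := hfin.fintype
    exact hinf (Module.Basis.finiteDimensional_of_finite b.toOrthonormalBasis.toBasis)
  haveI := hw.to_subtype
  exact ⟨fun i => b (Infinite.natEmbedding w i), b.orthonormal.comp _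
    ((Infinite.natEmbedding w).injective.comp Fin.val_injective)⟩

theorem not_tensor {ψ : E} (hinf : ¬ FiniteDimensional ℂ E) (hψ : ‖ψ‖ = 1)
    (J : OperatorTensor E G) :
    ¬ IsTensorBounded J (fun p q : E →L[ℂ] E => ⟪q ψ, p ψ⟫) := by
  rintro ⟨D, -, hDd, β, hβ, C, hC⟩
  have hψψ : ⟪ψ, ψ⟫ = (1 : ℂ) := by rw [inner_self_eq_norm_sq_to_K, hψ]; simp
  have key : ∀ n : ℕ, (n : ℝ) ≤ max C 0 := by
    intro n
    obtain ⟨e, he⟩ := exists_orthonormal_fin hinf n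
    have he' := orthonormal_iff_ite.mp he
    let S : ↥J.compactSpan := ∑ i, ⟨rkOp (J.tmul (e i) ψ) (J.tmul ψ (e i)),
        mem_compactSpan J (e i) ψ ψ (e i)⟩
    have hβS : β S = n := by
      simp only [S, map_sum, beta_rkOp hDd hβ]
      simp [hψ, he.1]
    have o1 : Orthonormal ℂ (fun i => J.tmul (e i) ψ) := by
      rw [orthonormal_iff_ite]; intro i j
      rw [J.inner_tmul, hψψ, he', mul_one]
    have o2 : Orthonormal ℂ (fun i => J.tmul ψ (e i)) := by
      rw [orthonormal_iff_ite]; intro i j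
      rw [J.inner_tmul, hψψ, he', one_mul]
    have hS : ‖(S : G →L[ℂ] G)‖ ≤ 1 := by
      refine ContinuousLinearMap.opNorm_le_bound _ zero_le_one fun z => ?_
      have hz : (S : G →L[ℂ] G) z = ∑ i, ⟪J.tmul ψ (e i), z⟫ • J.tmul (e i) ψ := by
        simp only [S, Submodule.coe_sum, ContinuousLinearMap.sum_apply, rkOp_apply]
      rw [hz, one_mul]
      refine (sq_le_sq₀ (norm_nonneg _) (norm_nonneg _)).mp ?_
      have hb := o2.sum_inner_products_le (s := Finset.univ) z
      refine le_trans (le_of_eq ?_) hb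
      have hi := o1.inner_sum (fun i => ⟪J.tmul ψ (e i), z⟫)
        (fun i => ⟪J.tmul ψ (e i), z⟫) Finset.univ
      rw [inner_self_eq_norm_sq_to_K] at hi
      simp only [Complex.coe_algebraMap, RCLike.conj_mul] at hi
      exact_mod_cast hi
    have h := hC S
    rw [hβS] at h
    calc (n : ℝ) = ‖(n : ℂ)‖ := by simp
      _ ≤ C * ‖(S : G →L[ℂ] G)‖ := h
      _ ≤ max C 0 * ‖(S : G →L[ℂ] G)‖ :=
        mul_le_mul_of_nonneg_right (le_max_left _ _) (norm_nonneg _)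
      _ ≤ max C 0 * 1 := mul_le_mul_of_nonneg_left hS (le_max_right _ _)
      _ = _ := mul_one _
  obtain ⟨n, hn⟩ := exists_nat_gt (max C 0)
  exact absurd (key n) (not_le.mpr hn)

/-- The decoherence functional `d_ψ(p,q) = ⟨pψ, qψ⟩` on a
separable infinite dimensional Hilbert space is tracially bounded: its
associated functional `β_ψ` is uniformly bounded on the projections `p_ξ`,
`ξ` a unit vector of `𝔥 ⊗_alg 𝔥`. Consequently tracial boundedness is strictly
weaker than tensor boundedness: `d_ψ` is tracially bounded but not tensor
bounded. -/
theorem stmt_14 [TopologicalSpace.SeparableSpace E] (hinf : ¬ FiniteDimensional ℂ E)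
    (ψ : E) (hψ : ‖ψ‖ = 1)
    (J : OperatorTensor E G)
    (D : (E →L[ℂ] E) →ₗ[ℂ] (E →L[ℂ] E) →ₗ[ℂ] ℂ)
    (hD : IsBoundedBilinear D)
    (hDd : ExtendsDF D (fun p q : E →L[ℂ] E => ⟪q ψ, p ψ⟫))
    (β : ↥J.compactSpan →ₗ[ℂ] ℂ) (hβ : IsBetaFor J D β) :
    BetaTraciallyBounded J β ∧
    IsTraciallyBounded J (fun p q : E →L[ℂ] E => ⟪q ψ, p ψ⟫) ∧
    ¬ IsTensorBounded J (fun p q : E →L[ℂ] E => ⟪q ψ, p ψ⟫) := by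
  have h := beta_tracially hψ hDd hβ
  refine ⟨h, ⟨⟨1, fun p q hp hq => ?_⟩, D, hD, hDd, β, hβ, h⟩, not_tensor hinf hψ J⟩
  calc ‖⟪q ψ, p ψ⟫‖ ≤ ‖q ψ‖ * ‖p ψ‖ := norm_inner_le_norm _ _
    _ ≤ 1 * 1 := by
      gcongr
      · exact (isOrthoProj_apply_le hq ψ).trans hψ.le
      · exact (isOrthoProj_apply_le hp ψ).trans hψ.le
    _ = 1 := mul_one _
end
end
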